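/- For every natural number s, (2s+1) · binom(2s, s) = binom(2s, s) + 2 · Σ_{m=1}^{s} (4^{m−1} + (2m−1) · binom(2m−2, m−1)) · C_{s−m}, where C_k = binom(2k,k)/(k+1) is the k-th Catalan number. Equivalently, the sequence V_s = 4^s + (2s+1)·binom(2s,s) satisfies the recursion V_s = binom(2s,s) + 4^s + 2 Σ_{m=1}^{s} V_{m−1} C_{s−m}. -/

import Mathlib

/-!
Let `B`, `C`, `V` be the generating functions of the central binomial coefficients, of the
Catalan numbers and of `V_s`. The quadratic equation of `C` says that `D = 1 - 2XC` is a square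
root of `1 - 4X`. Differentiating `D² = 1 - 4X`, where `D' = -2B`, gives `BD = 1`, and
differentiating `BD = 1` gives `B' = 2B³`. Since `B² = 1 / (1 - 4X)` is the generating function
of `4 ^ n`, it follows that `V = B² + (B + 2XB') = B² + B³`, and multiplying by `2XC = 1 - D`
gives `2XCV = V - B - B²`, which is the recursion.
-/

open PowerSeries Finset

section GeneralPowerSeries

variable {R : Type*}

lemma coeff_X_mul_mul_eq_sum_Icc [Semiring R] (f g : R⟦X⟧) (n : ℕ) :
    coeff n (X * (f * g)) = ∑ m ∈ Icc 1 n, coeff (m - 1) f * coeff (n - m) g := by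
  cases n with
  | zero => simp
  | succ n =>
    rw [coeff_succ_X_mul, coeff_mul,
      Nat.sum_antidiagonal_eq_sum_range_succ (fun i j ↦ coeff i f * coeff j g),
      ← Ico_add_one_right_eq_Icc, sum_Ico_eq_sum_range]
    simp [add_comm 1]

lemma coeff_X_mul_derivative [CommSemiring R] (f : R⟦X⟧) (n : ℕ) :
    coeff n (X * d⁄dX R f) = n * coeff n f := by
  cases n with
  | zero => simp
  | succ n => rw [coeff_succ_X_mul, coeff_derivative, mul_comm, Nat.cast_succ]

lemma mk_pow_mul_one_sub_C_mul_X [CommRing R] (a : R) :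
    mk (fun n ↦ a ^ n) * (1 - C a * X) = 1 := by
  simpa [rescale_mk, ← smul_eq_C_mul] using congrArg (rescale a) (mk_one_mul_one_sub_eq_one R)

end GeneralPowerSeries

/-- The generating function of the central binomial coefficients, with integer coefficients so
that it can be subtracted. -/
def centralBinomSeries : ℤ⟦X⟧ := mk fun n ↦ (n.centralBinom : ℤ)

/-- The generating function of the Catalan numbers, `PowerSeries.catalanSeries` with its
coefficients cast to `ℤ`. -/
noncomputable def intCatalanSeries : ℤ⟦X⟧ := map (Nat.castRingHom ℤ) catalanSeries

/-- The square root `1 - 2XC` of `1 - 4X`, where `C` is the Catalan generating function. -/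
noncomputable def sqrtOneSubFourX : ℤ⟦X⟧ := 1 - 2 * X * intCatalanSeries

/-- The sequence `V_n = 4 ^ n + (2n + 1) B_n`, which counts the edges of horizontal length `1`
among all Dyck matchings on `2(n + 1)` points. -/
def shortEdgeCount (n : ℕ) : ℕ := 4 ^ n + (2 * n + 1) * n.centralBinom

/-- The generating function `V` of `shortEdgeCount`, with integer coefficients. -/
def shortEdgeSeries : ℤ⟦X⟧ := mk fun n ↦ (shortEdgeCount n : ℤ)

lemma X_mul_intCatalanSeries_sq : X * intCatalanSeries ^ 2 = intCatalanSeries - 1 := by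
  have h := congrArg (map (Nat.castRingHom ℤ)) catalanSeries_sq_mul_X_add_one
  simp only [map_add, map_mul, map_pow, map_one, map_X] at h
  rw [intCatalanSeries]
  linear_combination h

lemma sqrtOneSubFourX_sq : sqrtOneSubFourX ^ 2 = 1 - 4 * X := by
  rw [sqrtOneSubFourX]
  linear_combination 4 * X * X_mul_intCatalanSeries_sq

lemma derivative_X_mul_intCatalanSeries :
    d⁄dX ℤ (X * intCatalanSeries) = centralBinomSeries := by
  ext n
  rw [coeff_derivative, coeff_succ_X_mul, centralBinomSeries, coeff_mk,
    ← succ_mul_catalan_eq_centralBinom]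
  simp [intCatalanSeries, mul_comm]

lemma derivative_sqrtOneSubFourX : d⁄dX ℤ sqrtOneSubFourX = -2 * centralBinomSeries := by
  have h : sqrtOneSubFourX = 1 - (2 : ℤ) • (X * intCatalanSeries) := by
    simp [sqrtOneSubFourX, mul_assoc, zsmul_eq_mul]
  rw [h, map_sub, map_zsmul, derivative_X_mul_intCatalanSeries, derivative_one, zsmul_eq_mul]
  push_cast
  ring

lemma centralBinomSeries_mul_sqrtOneSubFourX : centralBinomSeries * sqrtOneSubFourX = 1 := by
  have h := congrArg (d⁄dX ℤ) sqrtOneSubFourX_sq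
  have h4 : d⁄dX ℤ (4 * X : ℤ⟦X⟧) = 4 := by
    have hconst : d⁄dX ℤ (4 : ℤ⟦X⟧) = 0 := (d⁄dX ℤ).map_natCast 4
    rw [Derivation.leibniz, derivative_X, hconst, smul_zero, add_zero, smul_eq_mul, mul_one]
  rw [derivative_pow, derivative_sqrtOneSubFourX, map_sub, derivative_one, h4] at h
  have hfour : (4 : ℤ⟦X⟧) ≠ 0 :=
    (map_ne_zero_iff (C (R := ℤ)) C_injective).mpr four_ne_zero
  refine mul_left_cancel₀ hfour ?_
  push_cast at h
  linear_combination -h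

lemma centralBinomSeries_sq_mul_one_sub_four_X :
    centralBinomSeries ^ 2 * (1 - 4 * X) = 1 := by
  rw [← sqrtOneSubFourX_sq, ← mul_pow, centralBinomSeries_mul_sqrtOneSubFourX, one_pow]

lemma mk_four_pow_eq_centralBinomSeries_sq :
    (mk fun n ↦ 4 ^ n : ℤ⟦X⟧) = centralBinomSeries ^ 2 := by
  have h : (mk fun n ↦ 4 ^ n : ℤ⟦X⟧) * (1 - 4 * X) = 1 := mk_pow_mul_one_sub_C_mul_X 4
  exact left_inv_eq_right_inv h ((mul_comm _ _).trans centralBinomSeries_sq_mul_one_sub_four_X)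

lemma derivative_centralBinomSeries :
    d⁄dX ℤ centralBinomSeries = 2 * centralBinomSeries ^ 3 := by
  have hBD := centralBinomSeries_mul_sqrtOneSubFourX
  have h := congrArg (d⁄dX ℤ) hBD
  rw [Derivation.leibniz, derivative_sqrtOneSubFourX, derivative_one, smul_eq_mul,
    smul_eq_mul] at h
  linear_combination centralBinomSeries * h - d⁄dX ℤ centralBinomSeries * hBD

lemma shortEdgeSeries_eq_centralBinomSeries_sq_add_cube :
    shortEdgeSeries = centralBinomSeries ^ 2 + centralBinomSeries ^ 3 := by
  have hV : shortEdgeSeries = mk (fun n ↦ 4 ^ n) +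
      (centralBinomSeries + (2 : ℤ) • (X * d⁄dX ℤ centralBinomSeries)) := by
    ext n
    simp only [map_add, map_zsmul, coeff_X_mul_derivative, smul_eq_mul]
    simp only [shortEdgeSeries, shortEdgeCount, centralBinomSeries, coeff_mk]
    push_cast
    ring
  rw [hV, mk_four_pow_eq_centralBinomSeries_sq, derivative_centralBinomSeries, zsmul_eq_mul]
  push_cast
  linear_combination -centralBinomSeries * centralBinomSeries_sq_mul_one_sub_four_X

lemma shortEdgeSeries_eq_add_two_mul_X_mul :
    shortEdgeSeries = centralBinomSeries + mk (fun n ↦ 4 ^ n) +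
      2 * (X * (shortEdgeSeries * intCatalanSeries)) := by
  have hBD := centralBinomSeries_mul_sqrtOneSubFourX
  rw [sqrtOneSubFourX] at hBD
  rw [shortEdgeSeries_eq_centralBinomSeries_sq_add_cube, mk_four_pow_eq_centralBinomSeries_sq]
  linear_combination (centralBinomSeries + centralBinomSeries ^ 2) * hBD

theorem shortEdgeCount_eq_add_sum (s : ℕ) :
    shortEdgeCount s = s.centralBinom + 4 ^ s +
      2 * ∑ m ∈ Icc 1 s, shortEdgeCount (m - 1) * catalan (s - m) := by
  have h := congrArg (coeff s) shortEdgeSeries_eq_add_two_mul_X_mul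
  rw [two_mul, map_add, map_add, map_add, ← two_mul, coeff_X_mul_mul_eq_sum_Icc] at h
  simp only [shortEdgeSeries, centralBinomSeries, intCatalanSeries, coeff_mk, coeff_map,
    catalanSeries_coeff, Nat.coe_castRingHom] at h
  exact_mod_cast h

theorem V_recursion (s : ℕ) :
    4 ^ s + (2 * s + 1) * Nat.choose (2 * s) s =
      Nat.choose (2 * s) s + 4 ^ s +
        2 * ∑ m ∈ Finset.Icc 1 s,
          (4 ^ (m - 1) + (2 * m - 1) * Nat.choose (2 * m - 2) (m - 1)) * catalan (s - m) := by
  have hterm : ∀ m ∈ Icc 1 s, shortEdgeCount (m - 1) =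
      4 ^ (m - 1) + (2 * m - 1) * Nat.choose (2 * m - 2) (m - 1) := by
    intro m hm
    obtain ⟨k, rfl⟩ := Nat.exists_eq_add_of_le' (mem_Icc.mp hm).1
    rfl
  rw [← sum_congr rfl fun m hm ↦ congrArg (· * catalan (s - m)) (hterm m hm)]
  exact shortEdgeCount_eq_add_sum s
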